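/- arXiv:math/0509602 — 4 statements merged into one kernel-verified Lean document; each statement's English description precedes it below -/
import Mathlib

section
/- Let f be a continuous complex-valued function on the unit circle T = {z ∈ ℂ : |z| = 1}, and for |z| < 1 define h(z) = ∫₀^{2π} f(e^{it}) P(z, e^{it}) dt, where P(z, w) = (1/(2π)) · (1 − |z|²)/|z − w|² is the Poisson kernel of the unit disk. Then for every ζ ∈ ℂ with |ζ| = 1, h(z) → f(ζ) as z → ζ with |z| < 1; consequently the function equal to h on the open unit disk and to f on the unit circle is continuous on the closed unit disk {z ∈ ℂ : |z| ≤ 1}. -/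
open Filter MeasureTheory Set

/-- The Poisson kernel of the unit disk. -/
noncomputable def poissonKernelDisk (z w : ℂ) : ℝ :=
  (1 / (2 * Real.pi)) * ((1 - ‖z‖ ^ 2) / ‖z - w‖ ^ 2)

/-!
As `z` tends to a boundary point `ζ`, the functions `P(z, ·)` form an approximate identity at `ζ`
on the unit circle. They are nonnegative, and have total mass `1` by Poisson's formula for the
constant function `1`. Away from `ζ` they tend to `0` uniformly: `P` is jointly continuous off the
diagonal and `P(ζ, ·) = 0`, so on compact sets avoiding `ζ` the convergence is uniform.
-/

open Metric
open scoped Real Topology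

lemma continuousOn_closedBall_ite_dist_lt {X Y : Type*} [PseudoMetricSpace X] [TopologicalSpace Y]
    {g f : X → Y} {c : X} {r : ℝ} (hg : ContinuousOn g (ball c r))
    (hf : ContinuousOn f (sphere c r))
    (hlim : ∀ x ∈ sphere c r, Tendsto g (𝓝[ball c r] x) (𝓝 (f x))) :
    ContinuousOn (fun x => if dist x c < r then g x else f x) (closedBall c r) := by
  have hball : closedBall c r ∩ {x | dist x c < r} = ball c r :=
    inter_eq_right.2 ball_subset_closedBall
  have hsphere : closedBall c r ∩ {x | ¬dist x c < r} = sphere c r := closedBall_sdiff_ball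
  have hfrontier : frontier {x | dist x c < r} ⊆ sphere c r := frontier_ball_subset_sphere
  refine ContinuousOn.if' ?_ ?_ (hball ▸ hg) (hsphere ▸ hf)
  · rintro x ⟨-, hx⟩
    rw [hball, if_neg (hfrontier hx).not_lt]
    exact hlim x (hfrontier hx)
  · rintro x ⟨-, hx⟩
    rw [hsphere, if_neg (hfrontier hx).not_lt]
    exact hf x (hfrontier hx)

section Kernel

variable {z w ζ : ℂ}

lemma poissonKernelDisk_nonneg (hz : ‖z‖ ≤ 1) (w : ℂ) : 0 ≤ poissonKernelDisk z w := by
  have : 0 ≤ 1 - ‖z‖ ^ 2 := sub_nonneg.2 (pow_le_one₀ (norm_nonneg z) hz)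
  unfold poissonKernelDisk
  positivity

lemma poissonKernelDisk_eq_zero_of_norm_eq_one (hz : ‖z‖ = 1) (w : ℂ) :
    poissonKernelDisk z w = 0 := by
  simp [poissonKernelDisk, hz]

lemma poissonKernelDisk_eq_poissonKernel (z : ℂ) (hw : ‖w‖ = 1) :
    poissonKernelDisk z w = (2 * π)⁻¹ * poissonKernel 0 z w := by
  simp [poissonKernelDisk, poissonKernel, hw, norm_sub_rev z w]

lemma continuousAt_uncurry_poissonKernelDisk (hzw : z ≠ w) :
    ContinuousAt (Function.uncurry poissonKernelDisk) (z, w) := by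
  have : ‖z - w‖ ^ 2 ≠ 0 := by simpa [sub_eq_zero] using hzw
  unfold poissonKernelDisk Function.uncurry
  fun_prop (disch := assumption)

lemma continuousOn_uncurry_poissonKernelDisk :
    ContinuousOn (Function.uncurry poissonKernelDisk) (ball 0 1 ×ˢ sphere 0 1) := by
  rintro ⟨z, w⟩ ⟨hz, hw⟩
  refine (continuousAt_uncurry_poissonKernelDisk ?_).continuousWithinAt
  rintro rfl
  exact ne_of_lt hz hw

lemma continuousOn_poissonKernelDisk (hz : z ∈ ball (0 : ℂ) 1) :
    ContinuousOn (poissonKernelDisk z) (sphere 0 1) :=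
  continuousOn_uncurry_poissonKernelDisk.uncurry_left z hz

lemma tendstoUniformlyOn_poissonKernelDisk (hζ : ‖ζ‖ = 1) {K : Set ℂ} (hK : IsCompact K)
    (hζK : ζ ∉ K) : TendstoUniformlyOn poissonKernelDisk 0 (𝓝 ζ) K := by
  rw [← tendstoLocallyUniformlyOn_iff_tendstoUniformlyOn_of_compact hK,
    tendstoLocallyUniformlyOn_iff_forall_tendsto]
  intro w hw
  have hlim : Tendsto (Function.uncurry poissonKernelDisk) (𝓝 ζ ×ˢ 𝓝[K] w) (𝓝 0) := by
    rw [← poissonKernelDisk_eq_zero_of_norm_eq_one hζ w]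
    refine (continuousAt_uncurry_poissonKernelDisk (ne_of_mem_of_not_mem hw hζK).symm).mono_left ?_
    rw [nhds_prod_eq]
    exact prod_mono_right _ nhdsWithin_le_nhds
  exact tendsto_left_nhds_uniformity.comp hlim

end Kernel

/-- Arc length on the unit circle, as a measure on `ℂ`: the image of Lebesgue measure on
`(0, 2π]` under `t ↦ exp (t * I)`. Integrating over points of the circle rather than over angles
spares a separate treatment of the boundary point `1`, the image of both endpoints. -/
noncomputable def unitCircleArcLength : Measure ℂ :=
  (volume.restrict (Ioc 0 (2 * π))).map fun t : ℝ => Complex.exp (t * Complex.I)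

section ArcLength

variable {E : Type*} [NormedAddCommGroup E] {g : ℂ → E}

instance : IsFiniteMeasure unitCircleArcLength := by
  unfold unitCircleArcLength
  infer_instance

lemma ae_mem_sphere_unitCircleArcLength :
    ∀ᵐ w ∂unitCircleArcLength, w ∈ sphere (0 : ℂ) 1 := by
  refine (ae_map_iff (by fun_prop) isClosed_sphere.measurableSet).2 (.of_forall fun t => ?_)
  simp [Complex.norm_exp_ofReal_mul_I]

lemma unitCircleArcLength_restrict_sphere :
    unitCircleArcLength.restrict (sphere 0 1) = unitCircleArcLength :=
  Measure.restrict_eq_self_of_ae_mem ae_mem_sphere_unitCircleArcLength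

lemma integrable_unitCircleArcLength_of_continuousOn (hg : ContinuousOn g (sphere 0 1)) :
    Integrable g unitCircleArcLength := by
  rw [← unitCircleArcLength_restrict_sphere]
  exact hg.integrableOn_compact (isCompact_sphere 0 1)

lemma integral_unitCircleArcLength [NormedSpace ℝ E]
    (hg : AEStronglyMeasurable g unitCircleArcLength) :
    ∫ w, g w ∂unitCircleArcLength =
      ∫ t in (0 : ℝ)..(2 * π), g (Complex.exp (t * Complex.I)) := by
  rw [intervalIntegral.integral_of_le Real.two_pi_pos.le]
  exact integral_map (by fun_prop) hg

end ArcLength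

lemma integral_poissonKernelDisk {z : ℂ} (hz : z ∈ ball (0 : ℂ) 1) :
    ∫ w, poissonKernelDisk z w ∂unitCircleArcLength = 1 := by
  have haverage : Real.circleAverage (poissonKernel 0 z • fun _ => (1 : ℝ)) 0 1 = 1 :=
    InnerProductSpace.HarmonicContOnCl.circleAverage_poissonKernel_smul
      InnerProductSpace.harmonicContOnCl_const hz
  calc ∫ w, poissonKernelDisk z w ∂unitCircleArcLength
      = ∫ t in (0 : ℝ)..(2 * π), poissonKernelDisk z (Complex.exp (t * Complex.I)) :=
        integral_unitCircleArcLength (integrable_unitCircleArcLength_of_continuousOn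
          (continuousOn_poissonKernelDisk hz)).aestronglyMeasurable
    _ = Real.circleAverage (poissonKernel 0 z • fun _ => (1 : ℝ)) 0 1 := by
        simp [Real.circleAverage_def, circleMap, Complex.norm_exp_ofReal_mul_I,
          poissonKernelDisk_eq_poissonKernel]
    _ = 1 := haverage

section PoissonIntegral

variable {E : Type*} [NormedAddCommGroup E] [NormedSpace ℝ E] {f : ℂ → E}

/-- The Poisson integral of a function `f` on the unit circle, with values in a real normed space;
only the values of `f` on the circle matter. -/
noncomputable def poissonIntegral (f : ℂ → E) (z : ℂ) : E :=
  ∫ w, poissonKernelDisk z w • f w ∂unitCircleArcLength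

lemma poissonIntegral_eq_intervalIntegral (hf : ContinuousOn f (sphere 0 1)) {z : ℂ}
    (hz : z ∈ ball (0 : ℂ) 1) :
    poissonIntegral f z = ∫ t in (0 : ℝ)..(2 * π),
      poissonKernelDisk z (Complex.exp (t * Complex.I)) • f (Complex.exp (t * Complex.I)) :=
  integral_unitCircleArcLength (integrable_unitCircleArcLength_of_continuousOn
    ((continuousOn_poissonKernelDisk hz).smul hf)).aestronglyMeasurable

lemma continuousOn_poissonIntegral (hf : Integrable f unitCircleArcLength) :
    ContinuousOn (poissonIntegral f) (ball 0 1) := by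
  refine isOpen_ball.continuousOn_iff.2 fun z₀ hz₀ => ?_
  obtain ⟨r, hz₀r, hr⟩ := exists_between (mem_ball_zero_iff.1 hz₀)
  have hsub : closedBall (0 : ℂ) r ⊆ ball 0 1 := closedBall_subset_ball hr
  have hnhds : closedBall (0 : ℂ) r ∈ 𝓝 z₀ :=
    mem_of_superset (isOpen_ball.mem_nhds (mem_ball_zero_iff.2 hz₀r)) ball_subset_closedBall
  obtain ⟨M, hM⟩ :=
    ((isCompact_closedBall (0 : ℂ) r).prod (isCompact_sphere 0 1)).exists_bound_of_continuousOn
      (continuousOn_uncurry_poissonKernelDisk.mono (prod_mono_left hsub))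
  unfold poissonIntegral
  refine continuousAt_of_dominated (bound := fun w => M * ‖f w‖) ?_ ?_ (hf.norm.const_mul M) ?_
  · filter_upwards [hnhds] with z hz
    exact (integrable_unitCircleArcLength_of_continuousOn
      (continuousOn_poissonKernelDisk (hsub hz))).aestronglyMeasurable.smul hf.aestronglyMeasurable
  · filter_upwards [hnhds] with z hz
    filter_upwards [ae_mem_sphere_unitCircleArcLength] with w hw
    rw [norm_smul]
    exact mul_le_mul_of_nonneg_right (hM (z, w) ⟨hz, hw⟩) (norm_nonneg _)
  · filter_upwards [ae_mem_sphere_unitCircleArcLength] with w hw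
    exact ((continuousOn_uncurry_poissonKernelDisk.uncurry_right w hw).continuousAt
      (isOpen_ball.mem_nhds hz₀)).smul continuousAt_const

lemma tendsto_poissonIntegral [CompleteSpace E] (hf : Integrable f unitCircleArcLength) {ζ : ℂ}
    (hζ : ‖ζ‖ = 1) (hfζ : ContinuousWithinAt f (sphere 0 1) ζ) :
    Tendsto (poissonIntegral f) (𝓝[ball 0 1] ζ) (𝓝 (f ζ)) := by
  unfold poissonIntegral
  rw [← unitCircleArcLength_restrict_sphere]
  refine tendsto_setIntegral_peak_smul_of_integrableOn_of_tendsto isClosed_sphere.measurableSet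
    isClosed_sphere.measurableSet Subset.rfl self_mem_nhdsWithin (measure_ne_top _ _) ?_ ?_ ?_ ?_
    hf.integrableOn hfζ
  · filter_upwards [self_mem_nhdsWithin] with z hz w _
    exact poissonKernelDisk_nonneg (mem_ball_zero_iff.1 hz).le w
  · intro u hu hζu
    have hunif : TendstoUniformlyOn poissonKernelDisk 0 (𝓝 ζ) (sphere 0 1 \ u) :=
      tendstoUniformlyOn_poissonKernelDisk hζ ((isCompact_sphere 0 1).diff hu)
        fun hmem => hmem.2 hζu
    exact fun v hv => (hunif v hv).filter_mono nhdsWithin_le_nhds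
  · refine tendsto_const_nhds.congr' ?_
    filter_upwards [self_mem_nhdsWithin] with z hz
    rw [unitCircleArcLength_restrict_sphere, integral_poissonKernelDisk hz]
  · filter_upwards [self_mem_nhdsWithin] with z hz
    exact (continuousOn_poissonKernelDisk hz).aestronglyMeasurable isClosed_sphere.measurableSet

theorem poisson_integral_boundary_values_general [CompleteSpace E]
    (hf : ContinuousOn f {z : ℂ | ‖z‖ = 1}) {h : ℂ → E}
    (hh : ∀ z : ℂ, ‖z‖ < 1 →
      h z = ∫ t in (0 : ℝ)..(2 * π),
        poissonKernelDisk z (Complex.exp (t * Complex.I)) • f (Complex.exp (t * Complex.I))) :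
    (∀ ζ : ℂ, ‖ζ‖ = 1 → Tendsto h (𝓝[{z : ℂ | ‖z‖ < 1}] ζ) (𝓝 (f ζ))) ∧
      ContinuousOn (fun z : ℂ => if ‖z‖ < 1 then h z else f z) {z : ℂ | ‖z‖ ≤ 1} := by
  have hsphere : {z : ℂ | ‖z‖ = 1} = sphere 0 1 := by ext; simp
  have hball : {z : ℂ | ‖z‖ < 1} = ball 0 1 := by ext; simp
  have hclosedBall : {z : ℂ | ‖z‖ ≤ 1} = closedBall 0 1 := by ext; simp
  rw [hsphere] at hf
  rw [hball, hclosedBall]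
  have hint : Integrable f unitCircleArcLength :=
    integrable_unitCircleArcLength_of_continuousOn hf
  have heq : EqOn h (poissonIntegral f) (ball 0 1) := fun z hz =>
    (hh z (mem_ball_zero_iff.1 hz)).trans (poissonIntegral_eq_intervalIntegral hf hz).symm
  have hcont : ContinuousOn h (ball 0 1) := (continuousOn_poissonIntegral hint).congr heq
  have hlim (ζ : ℂ) (hζ : ‖ζ‖ = 1) : Tendsto h (𝓝[ball 0 1] ζ) (𝓝 (f ζ)) :=
    (tendsto_poissonIntegral hint hζ (hf ζ (mem_sphere_zero_iff_norm.2 hζ))).congr'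
      (heq.symm.eventuallyEq_of_mem self_mem_nhdsWithin)
  refine ⟨hlim, ?_⟩
  simpa only [dist_zero_right] using continuousOn_closedBall_ite_dist_lt hcont hf
    fun ζ hζ => hlim ζ (mem_sphere_zero_iff_norm.1 hζ)

end PoissonIntegral

theorem poisson_integral_boundary_values (f : ℂ → ℂ)
    (hf : ContinuousOn f {z : ℂ | ‖z‖ = 1})
    (h : ℂ → ℂ)
    (hh : ∀ z : ℂ, ‖z‖ < 1 →
      h z = ∫ t in (0:ℝ)..(2 * Real.pi),
        f (Complex.exp (t * Complex.I)) *
          (poissonKernelDisk z (Complex.exp (t * Complex.I)) : ℂ)) :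
    (∀ ζ : ℂ, ‖ζ‖ = 1 →
      Tendsto h (nhdsWithin ζ {z : ℂ | ‖z‖ < 1}) (nhds (f ζ))) ∧
    ContinuousOn (fun z : ℂ => if ‖z‖ < 1 then h z else f z)
      {z : ℂ | ‖z‖ ≤ 1} := by
  refine poisson_integral_boundary_values_general hf fun z hz => ?_
  simpa only [Complex.real_smul, mul_comm] using hh z hz
end

section
/- Let f : ℝ → ℂ be a continuous integrable function with Fourier transform f̂(ξ) = ∫_ℝ f(x) exp(−iξx) dx. Then for every x ∈ ℝ, the Abel means of the inverse Fourier integral converge to f(x): (1/(2π)) ∫_ℝ f̂(ξ) exp(−η|ξ|) exp(iξx) dξ → f(x) as η → 0⁺. -/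
open Filter MeasureTheory Set

open ProbabilityTheory VectorFourier
open scoped NNReal Topology

/-!
Inserting the definition of `f̂` and exchanging the integrals, the Abel mean at `x` becomes
`∫ f y * P_η (x - y) dy`, where `2 π P_η` is the Fourier transform of `exp (-η |ξ|)`. Integrating
the exponentials on the two half-lines gives `P_η t = η / (π (t ^ 2 + η ^ 2))`, the density of the
Cauchy distribution. It has total mass one and its rescalings concentrate at the origin as `η → 0⁺`,
so the convolution tends to `f x` wherever `f` is continuous.
-/

section TwoSidedExponential

variable {a z : ℂ}

theorem cexp_sub_mul_abs_eqOn_Ioi (a z : ℂ) :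
    EqOn (fun ξ : ℝ ↦ Complex.exp (z * ξ - a * |ξ|)) (fun ξ : ℝ ↦ Complex.exp ((z - a) * ξ))
      (Ioi 0) := by
  intro ξ hξ
  simp only [abs_of_pos (mem_Ioi.1 hξ), sub_mul]

theorem cexp_sub_mul_abs_eqOn_Iic (a z : ℂ) :
    EqOn (fun ξ : ℝ ↦ Complex.exp (z * ξ - a * |ξ|)) (fun ξ : ℝ ↦ Complex.exp ((z + a) * ξ))
      (Iic 0) := by
  intro ξ hξ
  simp only [abs_of_nonpos (mem_Iic.1 hξ), Complex.ofReal_neg, mul_neg, sub_neg_eq_add, add_mul]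

theorem integrableOn_Ioi_cexp_sub_mul_abs (hza : z.re < a.re) :
    IntegrableOn (fun ξ : ℝ ↦ Complex.exp (z * ξ - a * |ξ|)) (Ioi 0) :=
  (integrableOn_congr_fun (cexp_sub_mul_abs_eqOn_Ioi a z) measurableSet_Ioi).2 <|
    integrableOn_exp_mul_complex_Ioi (by simpa using hza) 0

theorem integrableOn_Iic_cexp_sub_mul_abs (hza : -a.re < z.re) :
    IntegrableOn (fun ξ : ℝ ↦ Complex.exp (z * ξ - a * |ξ|)) (Iic 0) :=
  (integrableOn_congr_fun (cexp_sub_mul_abs_eqOn_Iic a z) measurableSet_Iic).2 <|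
    integrableOn_exp_mul_complex_Iic (by simpa [← neg_lt_iff_pos_add] using hza) 0

theorem integrable_cexp_sub_mul_abs (hza : |z.re| < a.re) :
    Integrable fun ξ : ℝ ↦ Complex.exp (z * ξ - a * |ξ|) := by
  rw [← integrableOn_univ, ← Iic_union_Ioi (a := (0 : ℝ))]
  exact (integrableOn_Iic_cexp_sub_mul_abs (abs_lt.1 hza).1).union
    (integrableOn_Ioi_cexp_sub_mul_abs (abs_lt.1 hza).2)

theorem integral_cexp_sub_mul_abs (hza : |z.re| < a.re) :
    ∫ ξ : ℝ, Complex.exp (z * ξ - a * |ξ|) = 2 * a / (a ^ 2 - z ^ 2) := by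
  obtain ⟨hneg, hpos⟩ := abs_lt.1 hza
  have hsub_re : (z - a).re < 0 := by simpa using hpos
  have hadd_re : 0 < (z + a).re := by simpa [← neg_lt_iff_pos_add] using hneg
  have hsub : z - a ≠ 0 := fun h ↦ by simp [h] at hsub_re
  have hadd : z + a ≠ 0 := fun h ↦ by simp [h] at hadd_re
  have hfactor : a ^ 2 - z ^ 2 = -((z - a) * (z + a)) := by ring
  calc
    ∫ ξ : ℝ, Complex.exp (z * ξ - a * |ξ|)
      = (∫ ξ : ℝ in Iic 0, Complex.exp ((z + a) * ξ)) +
          ∫ ξ : ℝ in Ioi 0, Complex.exp ((z - a) * ξ) := by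
        rw [← intervalIntegral.integral_Iic_add_Ioi (integrableOn_Iic_cexp_sub_mul_abs hneg)
            (integrableOn_Ioi_cexp_sub_mul_abs hpos),
          setIntegral_congr_fun measurableSet_Iic (cexp_sub_mul_abs_eqOn_Iic a z),
          setIntegral_congr_fun measurableSet_Ioi (cexp_sub_mul_abs_eqOn_Ioi a z)]
    _ = 1 / (z + a) + -1 / (z - a) := by
        rw [integral_exp_mul_complex_Iic hadd_re, integral_exp_mul_complex_Ioi hsub_re]
        simp only [Complex.ofReal_zero, mul_zero, Complex.exp_zero]
    _ = 2 * a / (a ^ 2 - z ^ 2) := by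
        rw [hfactor]
        field_simp
        ring

end TwoSidedExponential

section CauchyKernel

theorem cauchyPDFReal_eq_inv_mul_cauchyPDFReal_zero_one (x₀ : ℝ) (γ : ℝ≥0) (x : ℝ) :
    cauchyPDFReal x₀ γ x = (γ : ℝ)⁻¹ * cauchyPDFReal 0 1 ((γ : ℝ)⁻¹ * (x₀ - x)) := by
  rw [cauchyPDFReal_def', cauchyPDFReal_def']
  push_cast
  ring

theorem tendsto_norm_sub_mul_cauchyPDFReal_cobounded (x₀ : ℝ) (γ : ℝ≥0) :
    Tendsto (fun x ↦ ‖x - x₀‖ * cauchyPDFReal x₀ γ x) (Bornology.cobounded ℝ) (𝓝 0) := by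
  have hinv : Tendsto (fun x : ℝ ↦ Real.pi⁻¹ * γ * ‖x - x₀‖⁻¹) (Bornology.cobounded ℝ) (𝓝 0) := by
    simpa using (tendsto_inv_atTop_zero.comp <| tendsto_norm_cobounded_atTop.comp <|
      tendsto_sub_const_cobounded x₀).const_mul (Real.pi⁻¹ * γ)
  refine squeeze_zero (fun x ↦ ?_) (fun x ↦ ?_) hinv
  · rw [cauchyPDFReal_def]
    positivity
  · rw [cauchyPDFReal_def, mul_left_comm]
    gcongr
    rcases eq_or_ne (x - x₀) 0 with hx | hx
    · simp [hx]
    · have hnorm : 0 < ‖x - x₀‖ := norm_pos_iff.2 hx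
      rw [← div_eq_mul_inv, div_le_iff₀ (by positivity), ← sq_abs (x - x₀), ← Real.norm_eq_abs,
        inv_mul_eq_div, le_div_iff₀ hnorm]
      nlinarith [sq_nonneg (γ : ℝ)]

theorem tendsto_integral_cauchyPDFReal_smul {E : Type*} [NormedAddCommGroup E] [NormedSpace ℝ E]
    [CompleteSpace E] {f : ℝ → E} {x : ℝ} (hf : Integrable f) (hx : ContinuousAt f x) :
    Tendsto (fun γ : ℝ≥0 ↦ ∫ y, cauchyPDFReal x γ y • f y) (𝓝[>] 0) (𝓝 (f x)) := by
  have hpeak := tendsto_integral_comp_smul_smul_of_integrable' (μ := volume)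
    (φ := cauchyPDFReal 0 1) (fun y ↦ (cauchyPDF_pos 0 one_ne_zero y).le)
    (integral_cauchyPDFReal_eq_one 0 one_ne_zero)
    (by simpa using tendsto_norm_sub_mul_cauchyPDFReal_cobounded 0 1) hf hx
  have hscale : Tendsto (fun γ : ℝ≥0 ↦ ((γ⁻¹ : ℝ≥0) : ℝ)) (𝓝[>] 0) atTop :=
    NNReal.tendsto_coe_atTop.2 tendsto_inv_nhdsGT_zero
  refine (hpeak.comp hscale).congr fun γ ↦ ?_
  simp only [Function.comp_apply, Module.finrank_self, pow_one, smul_eq_mul, NNReal.coe_inv,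
    ← cauchyPDFReal_eq_inv_mul_cauchyPDFReal_zero_one]

end CauchyKernel

section AbelMeans

theorem ofReal_exp_neg_mul_abs_mul_cexp (η x ξ : ℝ) :
    (Real.exp (-η * |ξ|) : ℂ) * Complex.exp (ξ * x * Complex.I) =
      Complex.exp (x * Complex.I * ξ - η * |ξ|) := by
  rw [Complex.ofReal_exp, ← Complex.exp_add]
  push_cast
  ring_nf

theorem fourierIntegral_cexp_sub_mul_abs {η : ℝ≥0} (hη : 0 < η) (x y : ℝ) :
    fourierIntegral Real.probChar volume (LinearMap.mul ℝ ℝ)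
        (fun ξ : ℝ ↦ Complex.exp (x * Complex.I * ξ - (η : ℝ) * |ξ|)) y =
      ((2 * Real.pi * cauchyPDFReal x η y : ℝ) : ℂ) := by
  have hre : |(((x - y : ℝ) : ℂ) * Complex.I).re| < (((η : ℝ) : ℂ)).re := by simpa using hη
  calc
    _ = ∫ ξ : ℝ, Complex.exp (((x - y : ℝ) : ℂ) * Complex.I * ξ - (η : ℝ) * |ξ|) := by
        simp only [fourierIntegral_probChar, LinearMap.mul_apply', smul_eq_mul, ← Complex.exp_add]
        congr! 3 with ξ
        push_cast
        ring
    _ = 2 * (η : ℝ) / ((η : ℝ) ^ 2 - (((x - y : ℝ) : ℂ) * Complex.I) ^ 2) :=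
        integral_cexp_sub_mul_abs hre
    _ = ((2 * (η : ℝ) / ((y - x) ^ 2 + (η : ℝ) ^ 2) : ℝ) : ℂ) := by
        rw [mul_pow, Complex.I_sq]
        push_cast
        ring_nf
    _ = ((2 * Real.pi * cauchyPDFReal x η y : ℝ) : ℂ) := by
        rw [cauchyPDFReal_def]
        congr 1
        field_simp

variable {E : Type*} [NormedAddCommGroup E] [NormedSpace ℂ E]

/-- The Abel mean with parameter `η` of the inverse Fourier integral of `g` at the point `x`, in the
normalization of the Fourier transform whose characters are `exp (i ξ x)`. It regularizes integrals
that need not converge; only `0 < η` is meaningful. -/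
noncomputable def abelMeanFourierInv (g : ℝ → E) (η x : ℝ) : E :=
  (1 / (2 * Real.pi) : ℂ) • ∫ ξ : ℝ,
    ((Real.exp (-η * |ξ|) : ℂ) * Complex.exp (ξ * x * Complex.I)) • g ξ

variable [CompleteSpace E] {f : ℝ → E}

theorem integral_cexp_sub_mul_abs_smul_fourierIntegral (hf : Integrable f) {η : ℝ≥0} (hη : 0 < η)
    (x : ℝ) :
    ∫ ξ : ℝ, Complex.exp (x * Complex.I * ξ - (η : ℝ) * |ξ|) •
        fourierIntegral Real.probChar volume (LinearMap.mul ℝ ℝ) f ξ =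
      ∫ y, ((2 * Real.pi * cauchyPDFReal x η y : ℝ) : ℂ) • f y := by
  have hint : Integrable fun ξ : ℝ ↦ Complex.exp (x * Complex.I * ξ - (η : ℝ) * |ξ|) :=
    integrable_cexp_sub_mul_abs (by simpa using hη)
  have hflip : (LinearMap.mul ℝ ℝ).flip = LinearMap.mul ℝ ℝ := by
    ext
    simp
  have hadjoint := integral_bilin_fourierIntegral_eq_flip (L := LinearMap.mul ℝ ℝ)
    (ContinuousLinearMap.lsmul ℂ ℂ (E := E)).flip Real.continuous_probChar
    (by simpa using continuous_mul) hf hint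
  simpa only [ContinuousLinearMap.flip_apply, ContinuousLinearMap.lsmul_apply, hflip,
    fourierIntegral_cexp_sub_mul_abs hη] using hadjoint

theorem abelMeanFourierInv_fourierIntegral (hf : Integrable f) {η : ℝ≥0} (hη : 0 < η) (x : ℝ) :
    abelMeanFourierInv (fourierIntegral Real.probChar volume (LinearMap.mul ℝ ℝ) f) η x =
      ∫ y, cauchyPDFReal x η y • f y := by
  simp only [abelMeanFourierInv, ofReal_exp_neg_mul_abs_mul_cexp,
    integral_cexp_sub_mul_abs_smul_fourierIntegral hf hη]
  rw [← integral_smul]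
  refine integral_congr_ae (ae_of_all _ fun y ↦ ?_)
  simp only [smul_smul, ← Complex.coe_smul (cauchyPDFReal x η y)]
  congr 1
  push_cast
  field_simp

theorem abel_means_fourier_inversion_general {x : ℝ} (hf : Integrable f) (hx : ContinuousAt f x) :
    Tendsto
      (abelMeanFourierInv (fourierIntegral Real.probChar volume (LinearMap.mul ℝ ℝ) f) · x)
      (𝓝[>] 0) (𝓝 (f x)) := by
  have htoNNReal : Tendsto Real.toNNReal (𝓝[>] 0) (𝓝[>] 0) := by
    refine tendsto_nhdsWithin_iff.2 ⟨?_, ?_⟩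
    · simpa using (continuous_real_toNNReal.tendsto 0).mono_left nhdsWithin_le_nhds
    · filter_upwards [self_mem_nhdsWithin] with η hη using Real.toNNReal_pos.2 hη
  refine ((tendsto_integral_cauchyPDFReal_smul hf hx).comp htoNNReal).congr' ?_
  filter_upwards [self_mem_nhdsWithin] with η (hη : 0 < η)
  rw [Function.comp_apply, ← abelMeanFourierInv_fourierIntegral hf (Real.toNNReal_pos.2 hη),
    Real.coe_toNNReal η hη.le]

end AbelMeans

theorem abel_means_fourier_inversion (f : ℝ → ℂ)
    (hfc : Continuous f) (hfi : Integrable f)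
    (fhat : ℝ → ℂ)
    (hfhat : ∀ ξ : ℝ, fhat ξ = ∫ x : ℝ, f x * Complex.exp (-(ξ : ℂ) * x * Complex.I)) :
    ∀ x : ℝ, Tendsto (fun η : ℝ =>
      (1 / (2 * Real.pi)) * ∫ ξ : ℝ,
        fhat ξ * (Real.exp (-η * |ξ|) : ℂ) * Complex.exp ((ξ : ℂ) * x * Complex.I))
      (nhdsWithin 0 (Set.Ioi 0)) (nhds (f x)) := by
  have hfourier : fhat = fourierIntegral Real.probChar volume (LinearMap.mul ℝ ℝ) f := by
    ext ξ
    simp [hfhat, fourierIntegral_probChar, mul_comm]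
  intro x
  convert abel_means_fourier_inversion_general hfi hfc.continuousAt using 2 with η
  simp only [abelMeanFourierInv, hfourier, smul_eq_mul, mul_assoc, mul_comm]
end

section
/- Let f : ℝ → ℂ be a bounded continuous almost periodic function which vanishes at infinity, i.e., for every ε > 0 there is R ≥ 0 such that |f(x)| < ε whenever |x| ≥ R. Then f(x) = 0 for every x ∈ ℝ. -/
/-- A function `f : ℝ → ℂ` is almost periodic if for every `ε > 0` there are finitely
many `y₁, …, yₙ ∈ ℝ` such that every translate of `f` is uniformly within `ε` of one of
the translates by the `yⱼ`. -/
def AlmostPeriodic (f : ℝ → ℂ) : Prop :=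
  ∀ ε : ℝ, 0 < ε → ∃ Y : Finset ℝ, Y.Nonempty ∧
    ∀ y : ℝ, ∃ yj ∈ Y, ∀ x : ℝ, ‖f (x - y) - f (x - yj)‖ < ε

/-!
By almost periodicity there is a finite set `Y` such that, for every `y`, the value `f x` is close
to one of the values `f (x + z - y)` with `z ∈ Y`. As `y` tends to infinity, these finitely many
values all approach the limit of `f` at infinity, so `f x` is equal to that limit.
-/

open Filter Set Topology Uniformity UniformConvergence

theorem tendsto_const_sub_cocompact {G : Type*} [AddGroup G] [TopologicalSpace G]
    [IsTopologicalAddGroup G] (a : G) : Tendsto (fun y ↦ a - y) (cocompact G) (cocompact G) :=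
  (Homeomorph.subLeft a).isClosedEmbedding.tendsto_cocompact

/-- Almost periodicity (in the sense of Bochner) for functions from a group to a uniform space: the
translates `x ↦ f (x - y)` form a totally bounded set for uniform convergence. On a
noncommutative group these are the right translates; `f` may be discontinuous. -/
def HasTotallyBoundedTranslates {G E : Type*} [AddGroup G] [UniformSpace E] (f : G → E) : Prop :=
  TotallyBounded (range fun y : G ↦ UniformFun.ofFun fun x ↦ f (x - y))

section Translates

variable {G E ι : Type*} [AddGroup G] [UniformSpace E] {f : G → E}

theorem hasTotallyBoundedTranslates_iff_of_hasBasis {p : ι → Prop} {V : ι → Set (E × E)}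
    (hV : (𝓤 E).HasBasis p V) :
    HasTotallyBoundedTranslates f ↔
      ∀ i, p i → ∃ Y : Finset G, ∀ y, ∃ z ∈ Y, ∀ x, (f (x - y), f (x - z)) ∈ V i := by
  classical
  have hbasis := UniformFun.hasBasis_uniformity_of_basis G E hV
  constructor
  · intro hf i hi
    obtain ⟨T, hT, hTfin, hcover⟩ := hf.exists_subset (hbasis.mem_of_mem hi)
    lift T to Finset (G →ᵤ E) using hTfin
    obtain ⟨Y, -, rfl⟩ := Finset.subset_set_image_iff.mp (image_univ ▸ hT)
    refine ⟨Y, fun y ↦ ?_⟩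
    obtain ⟨_, hz, hyz⟩ := mem_iUnion₂.mp (hcover (mem_range_self y))
    obtain ⟨z, hzY, rfl⟩ := Finset.mem_image.mp hz
    exact ⟨z, hzY, hyz⟩
  · intro h
    refine hbasis.totallyBounded_iff.mpr fun i hi ↦ ?_
    obtain ⟨Y, hY⟩ := h i hi
    refine ⟨_, Y.finite_toSet.image fun z ↦ UniformFun.ofFun fun x ↦ f (x - z), ?_⟩
    rintro _ ⟨y, rfl⟩
    obtain ⟨z, hz, hyz⟩ := hY y
    exact mem_biUnion (mem_image_of_mem _ hz) hyz

theorem almost_periodic_vanishing_at_infinity_is_zero_general [TopologicalSpace G]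
    [IsTopologicalAddGroup G] [NoncompactSpace G] [T0Space E] {c : E}
    (hf : HasTotallyBoundedTranslates f) (hlim : Tendsto f (cocompact G) (𝓝 c)) (x : G) :
    f x = c := by
  refine (eq_of_uniformity fun {V} hV ↦ ?_).symm
  obtain ⟨W, hW, hWV⟩ := comp_mem_uniformity_sets hV
  obtain ⟨Y, hY⟩ := (hasTotallyBoundedTranslates_iff_of_hasBasis (𝓤 E).basis_sets).mp hf W hW
  have hclose : ∀ᶠ y in cocompact G, ∀ z ∈ Y, (c, f (x + z - y)) ∈ W :=
    (eventually_all_finset Y).mpr fun z _ ↦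
      (hlim.comp (tendsto_const_sub_cocompact (x + z))).eventually (mem_nhds_left c hW)
  obtain ⟨y, hy⟩ := hclose.exists
  obtain ⟨z, hz, hyz⟩ := hY y
  have hback : (f (x + z - y), f x) ∈ W := by
    simpa only [id, add_sub_cancel_right] using hyz (x + z)
  exact hWV ⟨f (x + z - y), hy z hz, hback⟩

end Translates

theorem AlmostPeriodic.hasTotallyBoundedTranslates {f : ℝ → ℂ} (hf : AlmostPeriodic f) :
    HasTotallyBoundedTranslates f := by
  refine (hasTotallyBoundedTranslates_iff_of_hasBasis Metric.uniformity_basis_dist).mpr ?_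
  intro ε hε
  obtain ⟨Y, -, hY⟩ := hf ε hε
  simp only [← dist_eq_norm] at hY
  exact ⟨Y, hY⟩

theorem almost_periodic_vanishing_at_infinity_is_zero (f : ℝ → ℂ)
    (hfc : Continuous f) (hfb : ∃ A : ℝ, ∀ x : ℝ, ‖f x‖ ≤ A)
    (hfap : AlmostPeriodic f)
    (hvanish : ∀ ε : ℝ, 0 < ε → ∃ R : ℝ, 0 ≤ R ∧ ∀ x : ℝ, R ≤ |x| → ‖f x‖ < ε) :
    ∀ x : ℝ, f x = 0 := by
  have hlim : Tendsto f (cocompact ℝ) (𝓝 0) := zero_at_infty_of_norm_le f fun ε hε ↦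
    (hvanish ε hε).imp fun _ hR x hx ↦ hR.2 x hx.le
  exact almost_periodic_vanishing_at_infinity_is_zero_general hfap.hasTotallyBoundedTranslates hlim
end

section
/- Let f : ℝ → ℂ be a bounded continuous almost periodic function, and suppose f(x₀) ≠ 0 for some x₀ ∈ ℝ. Then there exist c > 0 and L > 0 such that for all real numbers a < b with b − a ≥ L, (1/(b − a)) ∫_a^b |f(x)| dx ≥ c. -/
open MeasureTheory intervalIntegral

/-!
Bochner's condition (finitely many translates approximate all of them) makes the `ε`-almost periods
of `f` relatively dense, as in Bohr's definition. For `ε < ‖f x₀‖`, continuity at `x₀` bounds `‖f‖`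
below by a positive constant on a ball around `x₀`, and every `ε`-almost period carries this bound
to a translate of the ball. Hence the integral of `‖f‖` over any interval of a suitable fixed length
is at least some `κ > 0`, and a long interval contains proportionally many disjoint such intervals.
-/

open Metric Set
open scoped NNReal

section AlmostPeriods

/-- The `ε`-almost periods of `f` in the sense of Bohr: the translations that move `f` by less than
`ε`, uniformly. They carry a lower bound for `‖f‖` near a point, up to `ε`, to its translates. -/
def almostPeriods {G X : Type*} [Add G] [PseudoMetricSpace X] (f : G → X) (ε : ℝ) : Set G :=
  {τ | ∀ x, dist (f (x + τ)) (f x) < ε}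

variable {G : Type*} [SeminormedAddCommGroup G]

theorem exists_isCover_almostPeriods_of_isBounded {X : Type*} [PseudoMetricSpace X] {f : G → X}
    {ε : ℝ} {Y : Set G} (hY : Bornology.IsBounded Y)
    (hfY : ∀ y, ∃ z ∈ Y, ∀ x, dist (f (x - y)) (f (x - z)) < ε) :
    ∃ R : ℝ≥0, IsCover R univ (almostPeriods f ε) := by
  obtain ⟨R, hR_pos, hR⟩ := hY.exists_pos_norm_le
  refine ⟨⟨R, hR_pos.le⟩, isCover_iff_subset_iUnion_closedBall.mpr fun a _ ↦ ?_⟩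
  obtain ⟨z, hzY, hz⟩ := hfY (-a)
  have hperiod : a + z ∈ almostPeriods f ε := fun x ↦ by
    simpa [add_assoc, add_comm z a] using hz (x + z)
  exact mem_biUnion hperiod ((dist_self_add_right z a).trans_le (hR z hzY))

theorem AlmostPeriodic.exists_isCover_almostPeriods {f : ℝ → ℂ} (hf : AlmostPeriodic f) {ε : ℝ}
    (hε : 0 < ε) : ∃ R : ℝ≥0, IsCover R univ (almostPeriods f ε) := by
  obtain ⟨Y, -, hY⟩ := hf ε hε
  simp only [← dist_eq_norm] at hY
  exact exists_isCover_almostPeriods_of_isBounded Y.finite_toSet.isBounded hY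

theorem exists_forall_almostPeriods_le_norm {E : Type*} [SeminormedAddCommGroup E] {f : G → E}
    {x₀ : G} {ε : ℝ} (hf : ContinuousAt f x₀) (hε : ε < ‖f x₀‖) :
    ∃ c > 0, ∃ δ > 0, ∀ τ ∈ almostPeriods f ε, ∀ x ∈ closedBall (x₀ + τ) δ, c ≤ ‖f x‖ := by
  obtain ⟨r, hεr, hr⟩ := exists_between hε
  obtain ⟨δ, hδ, hball⟩ := nhds_basis_closedBall.eventually_iff.mp (hf.norm.eventually_const_lt hr)
  refine ⟨r - ε, sub_pos.mpr hεr, δ, hδ, fun τ hτ x hx ↦ ?_⟩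
  have hlarge : r < ‖f (x - τ)‖ := hball (by simpa [dist_eq_norm, sub_sub, add_comm] using hx)
  have hclose : ‖f (x - τ) - f x‖ < ε := by
    simpa [dist_eq_norm, norm_sub_rev] using hτ (x - τ)
  linarith [norm_sub_norm_le (f (x - τ)) (f x)]

end AlmostPeriods

section Integral

variable {g : ℝ → ℝ}

theorem two_mul_mul_le_integral_of_closedBall {a b m δ c : ℝ} (hg : IntervalIntegrable g volume a b)
    (hg_nonneg : 0 ≤ g) (hδ : 0 ≤ δ) (ha : a ≤ m - δ) (hb : m + δ ≤ b)
    (hc : ∀ x ∈ closedBall m δ, c ≤ g x) : 2 * δ * c ≤ ∫ x in a..b, g x := by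
  have hle : m - δ ≤ m + δ := by linarith
  have hsub : uIcc (m - δ) (m + δ) ⊆ uIcc a b := by
    rw [uIcc_of_le hle, uIcc_of_le (ha.trans (hle.trans hb))]
    exact Icc_subset_Icc ha hb
  calc 2 * δ * c = ∫ _x in m - δ..m + δ, c := by
        rw [intervalIntegral.integral_const, smul_eq_mul]
        ring
    _ ≤ ∫ x in m - δ..m + δ, g x :=
        integral_mono_on hle intervalIntegrable_const (hg.mono_set hsub)
          (by rwa [← Real.closedBall_eq_Icc])
    _ ≤ ∫ x in a..b, g x := integral_mono_interval ha hle hb (.of_forall hg_nonneg) hg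

theorem natCast_mul_le_integral_of_forall_le_integral {κ l : ℝ} {μ : Measure ℝ}
    (hg : ∀ a b, IntervalIntegrable g μ a b)
    (hκ : ∀ a, κ ≤ ∫ x in a..a + l, g x ∂μ) (a : ℝ) (n : ℕ) :
    n * κ ≤ ∫ x in a..a + n * l, g x ∂μ := by
  calc n * κ = ∑ _k ∈ Finset.range n, κ := by simp
    _ ≤ ∑ k ∈ Finset.range n, ∫ x in a + k * l..a + (k + 1 : ℕ) * l, g x ∂μ := by
        refine Finset.sum_le_sum fun k _ ↦ ?_
        simpa [add_mul, add_assoc] using hκ (a + k * l)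
    _ = ∫ x in a..a + n * l, g x ∂μ := by
        simpa using sum_integral_adjacent_intervals (a := fun k : ℕ ↦ a + k * l) (n := n)
          fun _ _ ↦ hg _ _

theorem div_two_mul_le_interval_average {κ l : ℝ}
    (hg : ∀ a b, IntervalIntegrable g volume a b) (hg_nonneg : 0 ≤ g) (hκ_nonneg : 0 ≤ κ)
    (hl : 0 < l) (hκ : ∀ a, κ ≤ ∫ x in a..a + l, g x) {a b : ℝ} (hab : l ≤ b - a) :
    κ / (2 * l) ≤ ⨍ x in a..b, g x := by
  have hba : 0 < b - a := hl.trans_le hab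
  set n := ⌊(b - a) / l⌋₊
  have hn_le : n * l ≤ b - a := (le_div_iff₀ hl).mp (Nat.floor_le (by positivity))
  have hn_lt : b - a < (n + 1) * l := (div_lt_iff₀ hl).mp (Nat.lt_floor_add_one _)
  have hn_one : (1 : ℝ) ≤ n := by
    exact_mod_cast Nat.le_floor (by simpa using (one_le_div hl).mpr hab)
  have hintegral : n * κ ≤ ∫ x in a..b, g x :=
    (natCast_mul_le_integral_of_forall_le_integral hg hκ a n).trans <|
      integral_mono_interval le_rfl (le_add_of_nonneg_right (by positivity)) (by linarith)
        (.of_forall hg_nonneg) (hg a b)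
  have hlength : b - a ≤ n * (2 * l) := by nlinarith
  rw [interval_average_eq_div, div_le_div_iff₀ (by positivity) hba]
  calc κ * (b - a) ≤ κ * (n * (2 * l)) := by gcongr
    _ = n * κ * (2 * l) := by ring
    _ ≤ (∫ x in a..b, g x) * (2 * l) := by gcongr

end Integral

theorem almost_periodic_nonzero_mean_of_abs_general {E : Type*} [NormedAddCommGroup E] {f : ℝ → E}
    {x₀ ε : ℝ} (hf_int : ∀ a b, IntervalIntegrable f volume a b) (hf : ContinuousAt f x₀)
    (hε : ε < ‖f x₀‖) (hcover : ∃ R : ℝ≥0, IsCover R univ (almostPeriods f ε)) :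
    ∃ c > 0, ∃ L > 0, ∀ a b : ℝ, L ≤ b - a → c ≤ ⨍ x in a..b, ‖f x‖ := by
  obtain ⟨c, hc, δ, hδ, hbound⟩ := exists_forall_almostPeriods_le_norm hf hε
  obtain ⟨R, hR⟩ := hcover
  have hnorm_nonneg : 0 ≤ fun x ↦ ‖f x‖ := fun x ↦ norm_nonneg (f x)
  have hl : 0 < 2 * (R + δ) := by positivity
  have hκ (a : ℝ) : 2 * δ * c ≤ ∫ x in a..a + 2 * (R + δ), ‖f x‖ := by
    obtain ⟨τ, hτ, hdist⟩ :=
      mem_iUnion₂.mp (hR.subset_iUnion_closedBall (mem_univ (a + (R + δ) - x₀)))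
    obtain ⟨hleft, hright⟩ := abs_le.mp (mem_closedBall.mp hdist)
    exact two_mul_mul_le_integral_of_closedBall (hf_int _ _).norm hnorm_nonneg hδ.le
      (by linarith) (by linarith) (hbound τ hτ)
  exact ⟨2 * δ * c / (2 * (2 * (R + δ))), by positivity, 2 * (R + δ), hl, fun _ _ ↦
    div_two_mul_le_interval_average (fun a b ↦ (hf_int a b).norm) hnorm_nonneg (by positivity)
      hl hκ⟩

theorem almost_periodic_nonzero_mean_of_abs (f : ℝ → ℂ)
    (hfc : Continuous f) (hfb : ∃ A : ℝ, ∀ x : ℝ, ‖f x‖ ≤ A)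
    (hfap : AlmostPeriodic f)
    (x₀ : ℝ) (hx₀ : f x₀ ≠ 0) :
    ∃ c : ℝ, 0 < c ∧ ∃ L : ℝ, 0 < L ∧ ∀ a b : ℝ, a < b → L ≤ b - a →
      c ≤ (1 / (b - a)) * ∫ x in a..b, ‖f x‖ := by
  have hpos : 0 < ‖f x₀‖ := norm_pos_iff.mpr hx₀
  obtain ⟨c, hc, L, hL, hmean⟩ := almost_periodic_nonzero_mean_of_abs_general hfc.intervalIntegrable
    hfc.continuousAt (half_lt_self hpos) (hfap.exists_isCover_almostPeriods (half_pos hpos))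
  refine ⟨c, hc, L, hL, fun a b _ hab ↦ ?_⟩
  simpa only [interval_average_eq, one_div, smul_eq_mul] using hmean a b hab
end
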